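/- Every N-qubit state of the form |ψ⟩ ∝ Σ_{x∈A} i^{l(x)} (-1)^{q(x)} |x⟩, where A ⊆ (Z_2)^N is affine, l is linear, and q is quadratic over Z_2, is preserved in form under application of any Hadamard gate: applying H to any single qubit yields a state ∝ Σ_{x∈A'} i^{l'(x)} (-1)^{q'(x)} |x⟩ for some affine A', linear l', and quadratic q'. -/

import Mathlib

open scoped Classical

/-- A linear function on `(Z_2)^K`. -/
def IsLinear {K : ℕ} (l : (Fin K → ZMod 2) → ZMod 2) : Prop :=
  ∃ d : Fin K → ZMod 2, ∀ x, l x = ∑ i, d i * x i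

/-- A quadratic function on `(Z_2)^K`. -/
def IsQuadratic {K : ℕ} (q : (Fin K → ZMod 2) → ZMod 2) : Prop :=
  ∃ (c : Fin K → Fin K → ZMod 2) (d : Fin K → ZMod 2),
    ∀ x, q x = (∑ i, ∑ j, c i j * x i * x j) + ∑ i, d i * x i

/-- The Hadamard gate on qubit `k` of `N` qubits:
`H|a⟩ = (1/√2) Σ_b (-1)^{ab} |b⟩` on qubit `k`, identity elsewhere. -/
noncomputable def Hgate {N : ℕ} (k : Fin N) :
    Matrix (Fin N → ZMod 2) (Fin N → ZMod 2) ℂ :=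
  Matrix.of fun y z =>
    if ∀ i, i ≠ k → y i = z i then
      ((1 / Real.sqrt 2 : ℝ) : ℂ) * (-1 : ℂ) ^ (y k * z k).val
    else 0

/-- Affine function. -/
def Aff {K : ℕ} (f : (Fin K → ZMod 2) → ZMod 2) : Prop :=
  ∃ (d : Fin K → ZMod 2) (a : ZMod 2), ∀ x, f x = (∑ i, d i * x i) + a

/-- Quadratic function with a constant term. -/
def Quad {K : ℕ} (f : (Fin K → ZMod 2) → ZMod 2) : Prop :=
  ∃ (c : Fin K → Fin K → ZMod 2) (d : Fin K → ZMod 2) (a : ZMod 2),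
    ∀ x, f x = (∑ i, ∑ j, c i j * x i * x j) + (∑ i, d i * x i) + a

/-- Phase functions. -/
def Phase {K : ℕ} (g : (Fin K → ZMod 2) → ℂ) : Prop :=
  ∃ (c : ℂ) (l q : (Fin K → ZMod 2) → ZMod 2), c ≠ 0 ∧ IsLinear l ∧ IsQuadratic q ∧
    ∀ x, g x = c * (Complex.I ^ (l x).val * (-1 : ℂ) ^ (q x).val)

theorem z2 (a : ZMod 2) : a = 0 ∨ a = 1 := by
  revert a; decide

theorem val1 : (1 : ZMod 2).val = 1 := rfl

theorem Aff.add {K : ℕ} {f g : (Fin K → ZMod 2) → ZMod 2} (hf : Aff f) (hg : Aff g) :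
    Aff (fun x => f x + g x) := by
  obtain ⟨d, a, h⟩ := hf
  obtain ⟨d', a', h'⟩ := hg
  refine ⟨d + d', a + a', fun x => ?_⟩
  simp only [h, h', Pi.add_apply, add_mul, Finset.sum_add_distrib]
  ring

theorem Aff.const {K : ℕ} (a : ZMod 2) : Aff (fun _ : Fin K → ZMod 2 => a) :=
  ⟨0, a, fun x => by simp⟩

theorem Aff.cmul {K : ℕ} {f : (Fin K → ZMod 2) → ZMod 2} (b : ZMod 2) (hf : Aff f) :
    Aff (fun x => b * f x) := by
  obtain ⟨d, a, h⟩ := hf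
  refine ⟨fun i => b * d i, b * a, fun x => ?_⟩
  simp only [h, mul_add, Finset.mul_sum, mul_assoc]

theorem Aff.coord {K : ℕ} (i : Fin K) : Aff (fun x : Fin K → ZMod 2 => x i) :=
  ⟨Pi.single i 1, 0, fun x => by simp [Pi.single_apply]⟩

theorem Aff.sum {K : ℕ} {ι : Type*} (s : Finset ι) {f : ι → (Fin K → ZMod 2) → ZMod 2}
    (hf : ∀ i, Aff (f i)) : Aff (fun x => ∑ i ∈ s, f i x) := by
  induction s using Finset.induction_on with
  | empty => simpa using Aff.const 0
  | insert a s ha ih => simpa [Finset.sum_insert ha] using (hf a).add ih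

theorem Aff.comp {K : ℕ} {f : (Fin K → ZMod 2) → ZMod 2} (hf : Aff f)
    {T : (Fin K → ZMod 2) → (Fin K → ZMod 2)} (hT : ∀ i, Aff (fun y => T y i)) :
    Aff (fun y => f (T y)) := by
  obtain ⟨d, a, h⟩ := hf
  simp only [h]
  exact (Aff.sum _ fun i => (hT i).cmul (d i)).add (Aff.const a)

theorem IsLinear.aff {K : ℕ} {f : (Fin K → ZMod 2) → ZMod 2} (hf : IsLinear f) : Aff f := by
  obtain ⟨d, h⟩ := hf
  exact ⟨d, 0, fun x => by simp [h]⟩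

theorem Aff.ofLin {K : ℕ} (φ : (Fin K → ZMod 2) →ₗ[ZMod 2] ZMod 2) : Aff (fun x => φ x) :=
  ⟨fun i => φ (Pi.single i 1), 0, fun x => by
    beta_reduce
    rw [LinearMap.pi_apply_eq_sum_univ φ x, add_zero]
    refine Finset.sum_congr rfl fun i _ => ?_
    rw [smul_eq_mul, mul_comm]
    congr 2
    ext j
    simp [Pi.single_apply, eq_comm]⟩

theorem Quad.add {K : ℕ} {f g : (Fin K → ZMod 2) → ZMod 2} (hf : Quad f) (hg : Quad g) :
    Quad (fun x => f x + g x) := by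
  obtain ⟨c, d, a, h⟩ := hf
  obtain ⟨c', d', a', h'⟩ := hg
  refine ⟨c + c', d + d', a + a', fun x => ?_⟩
  simp only [h, h', Pi.add_apply, add_mul, Finset.sum_add_distrib]
  ring

theorem Aff.quad {K : ℕ} {f : (Fin K → ZMod 2) → ZMod 2} (hf : Aff f) : Quad f := by
  obtain ⟨d, a, h⟩ := hf
  exact ⟨0, d, a, fun x => by simp [h]⟩

theorem Quad.sum {K : ℕ} {ι : Type*} (s : Finset ι) {f : ι → (Fin K → ZMod 2) → ZMod 2}
    (hf : ∀ i, Quad (f i)) : Quad (fun x => ∑ i ∈ s, f i x) := by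
  induction s using Finset.induction_on with
  | empty => simpa using (Aff.const 0).quad
  | insert a s ha ih => simpa [Finset.sum_insert ha] using (hf a).add ih

theorem Aff.mul {K : ℕ} {f g : (Fin K → ZMod 2) → ZMod 2} (hf : Aff f) (hg : Aff g) :
    Quad (fun x => f x * g x) := by
  obtain ⟨d, a, h⟩ := hf
  obtain ⟨d', a', h'⟩ := hg
  refine ⟨fun i j => d i * d' j, fun i => a' * d i + a * d' i, a * a', fun x => ?_⟩
  have e1 : ∑ i, ∑ j, d i * d' j * x i * x j = (∑ i, d i * x i) * ∑ j, d' j * x j := by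
    rw [Finset.sum_mul_sum]
    refine Finset.sum_congr rfl fun i _ => Finset.sum_congr rfl fun j _ => by ring
  rw [e1]
  simp only [h, h', add_mul, Finset.sum_add_distrib, mul_assoc, ← Finset.mul_sum]
  ring

theorem IsQuadratic.comp {K : ℕ} {f : (Fin K → ZMod 2) → ZMod 2} (hf : IsQuadratic f)
    {T : (Fin K → ZMod 2) → (Fin K → ZMod 2)} (hT : ∀ i, Aff (fun y => T y i)) :
    Quad (fun y => f (T y)) := by
  obtain ⟨c, d, h⟩ := hf
  simp only [h]
  exact (Quad.sum _ fun i => Quad.sum _ fun j => ((hT i).cmul (c i j)).mul (hT j)).add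
    (Aff.sum _ fun i => (hT i).cmul (d i)).quad

/-- The difference of a quadratic function is affine. -/
theorem IsQuadratic.diff {K : ℕ} {f : (Fin K → ZMod 2) → ZMod 2} (hf : IsQuadratic f)
    (e : Fin K → ZMod 2) : ∃ D, Aff D ∧ ∀ x, f (x + e) = f x + D x := by
  obtain ⟨c, d, h⟩ := hf
  refine ⟨fun x => (∑ i, ∑ j, ((c i j * e j) * x i + (c i j * e i) * x j + c i j * e i * e j))
    + ∑ i, d i * e i, ?_, fun x => ?_⟩
  · exact (Aff.sum _ fun i => Aff.sum _ fun j => (((Aff.coord i).cmul _).add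
      ((Aff.coord j).cmul _)).add (Aff.const _)).add (Aff.const _)
  · have e1 : ∑ i, ∑ j, c i j * (x + e) i * (x + e) j = (∑ i, ∑ j, c i j * x i * x j) +
      ∑ i, ∑ j, ((c i j * e j) * x i + (c i j * e i) * x j + c i j * e i * e j) := by
      simp only [← Finset.sum_add_distrib]
      refine Finset.sum_congr rfl fun i _ => Finset.sum_congr rfl fun j _ => ?_
      simp only [Pi.add_apply]; ring
    have e2 : ∑ i, d i * (x + e) i = (∑ i, d i * x i) + ∑ i, d i * e i := by
      simp only [← Finset.sum_add_distrib, Pi.add_apply, mul_add]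
    rw [h, h, e1, e2]; ring

theorem neg_pow_add (a b : ZMod 2) :
    (-1 : ℂ) ^ (a + b).val = (-1 : ℂ) ^ a.val * (-1 : ℂ) ^ b.val := by
  rcases z2 a with rfl | rfl <;> rcases z2 b with rfl | rfl <;>
    simp [val1, show (1 + 1 : ZMod 2) = 0 from rfl]

theorem I_pow_add (a b : ZMod 2) :
    Complex.I ^ (a + b).val =
      Complex.I ^ a.val * Complex.I ^ b.val * (-1 : ℂ) ^ (a * b).val := by
  rcases z2 a with rfl | rfl <;> rcases z2 b with rfl | rfl <;>
    simp [val1, show (1 + 1 : ZMod 2) = 0 from rfl]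

theorem Phase.mul {K : ℕ} {f g : (Fin K → ZMod 2) → ℂ} (hf : Phase f) (hg : Phase g) :
    Phase (fun x => f x * g x) := by
  obtain ⟨c, l, q, hc, hl, hq, h⟩ := hf
  obtain ⟨c', l', q', hc', hl', hq', h'⟩ := hg
  obtain ⟨C, D, A, hQ⟩ := (hl.aff.mul hl'.aff).add
    ((hq.comp Aff.coord).add (hq'.comp Aff.coord))
  obtain ⟨d, hd⟩ := hl
  obtain ⟨d', hd'⟩ := hl'
  refine ⟨c * c' * (-1) ^ A.val, fun x => l x + l' x,
    fun x => (∑ i, ∑ j, C i j * x i * x j) + ∑ i, D i * x i, ?_, ?_, ⟨C, D, fun _ => rfl⟩, ?_⟩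
  · simp [hc, hc']
  · exact ⟨d + d', fun x => by simp [hd, hd', add_mul, Finset.sum_add_distrib]⟩
  · intro x
    have e1 := congrArg (fun a : ZMod 2 => (-1 : ℂ) ^ a.val) (hQ x)
    simp only [neg_pow_add] at e1
    have e2 : (-1 : ℂ) ^ (l x * l' x).val * (-1 : ℂ) ^ (l x * l' x).val = 1 := by
      rw [← mul_pow]; simp
    simp only [h, h', I_pow_add, neg_pow_add]
    linear_combination (-c * c' * Complex.I ^ (l x).val * Complex.I ^ (l' x).val
      * (-1) ^ (q x).val * (-1) ^ (q' x).val) * e2 + (c * c' * Complex.I ^ (l x).val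
        * Complex.I ^ (l' x).val * (-1 : ℂ) ^ (l x * l' x).val) * e1

theorem IsLinear.zero {K : ℕ} : IsLinear (fun _ : Fin K → ZMod 2 => 0) :=
  ⟨0, fun x => by simp⟩

theorem Phase.ofQuad {K : ℕ} {q : (Fin K → ZMod 2) → ZMod 2} (hq : Quad q) :
    Phase (fun x => (-1 : ℂ) ^ (q x).val) := by
  obtain ⟨C, D, A, hQ⟩ := hq
  refine ⟨(-1) ^ A.val, _, _, by simp, IsLinear.zero, ⟨C, D, fun _ => rfl⟩, fun x => ?_⟩
  beta_reduce
  rw [hQ, neg_pow_add]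
  simp [mul_comm]

theorem Phase.const {K : ℕ} {c : ℂ} (hc : c ≠ 0) : Phase (fun _ : Fin K → ZMod 2 => c) :=
  ⟨c, _, fun _ => 0, hc, IsLinear.zero, ⟨0, 0, fun x => by simp⟩, fun x => by simp⟩

theorem Phase.ofLinear {K : ℕ} {l : (Fin K → ZMod 2) → ZMod 2} (hl : IsLinear l) :
    Phase (fun x => Complex.I ^ (l x).val) :=
  ⟨1, l, fun _ => 0, by simp, hl, ⟨0, 0, fun x => by simp⟩, fun x => by simp⟩

theorem Phase.ofAff {K : ℕ} {l : (Fin K → ZMod 2) → ZMod 2} (hl : Aff l) :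
    Phase (fun x => Complex.I ^ (l x).val) := by
  obtain ⟨d, a, h⟩ := hl
  have hL : IsLinear (fun x : Fin K → ZMod 2 => ∑ i, d i * x i) := ⟨d, fun _ => rfl⟩
  have := ((Phase.ofLinear hL).mul (Phase.const (c := Complex.I ^ a.val) (by simp))).mul
    (Phase.ofQuad (hL.aff.mul (Aff.const a)))
  simp only [h, I_pow_add]
  exact this

theorem exists_matrix {N : ℕ} (W : Submodule (ZMod 2) (Fin N → ZMod 2)) :
    ∃ (m : ℕ) (R : Matrix (Fin N) (Fin m) (ZMod 2)), R.rank = m ∧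
      LinearMap.range R.mulVecLin = W := by
  let b := Module.finBasis (ZMod 2) W
  let R : Matrix (Fin N) (Fin (Module.finrank (ZMod 2) W)) (ZMod 2) :=
    Matrix.of fun i j => (b j : Fin N → ZMod 2) i
  have hr : LinearMap.range R.mulVecLin = W := by
    rw [Matrix.range_mulVecLin]
    have : Set.range R.col = W.subtype '' (Set.range b) := by
      rw [← Set.range_comp]; rfl
    rw [this, Submodule.span_image, b.span_eq]
    simp
  refine ⟨_, R, ?_, hr⟩
  rw [Matrix.rank, hr]

theorem H_apply {N : ℕ} (k : Fin N) (ψ : (Fin N → ZMod 2) → ℂ) (y : Fin N → ZMod 2) :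
    (Hgate k).mulVec ψ y = ((1 / Real.sqrt 2 : ℝ) : ℂ) *
      (ψ (Function.update y k 0) + (-1) ^ (y k).val * ψ (Function.update y k 1)) := by
  have hne : Function.update y k 0 ≠ Function.update y k (1 : ZMod 2) := by
    intro h
    have := congrFun h k
    simp at this
  simp only [Matrix.mulVec, dotProduct]
  rw [← Finset.sum_subset (Finset.subset_univ
    {Function.update y k 0, Function.update y k (1 : ZMod 2)})]
  · rw [Finset.sum_pair hne]
    have h1 : ∀ b : ZMod 2, ∀ i, i ≠ k → y i = Function.update y k b i := by
      intro b i hi; simp [hi]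
    simp only [Hgate, Matrix.of_apply, if_pos (h1 _), Function.update_self]
    simp
    ring
  · intro z _ hz
    simp only [Hgate, Matrix.of_apply]
    rw [if_neg, zero_mul]
    intro h
    apply hz
    have hz' : z = Function.update y k (z k) := by
      ext i
      by_cases hi : i = k
      · subst hi; simp
      · simp [hi, h i hi]
    rcases z2 (z k) with h0 | h0 <;> rw [h0] at hz' <;> rw [hz'] <;> simp

theorem update_eq {N : ℕ} (k : Fin N) (y : Fin N → ZMod 2) (b : ZMod 2) :
    Function.update y k b = y + (b + y k) • Pi.single k (1 : ZMod 2) := by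
  ext i
  by_cases hi : i = k
  · subst hi
    have : y i + y i = 0 := CharTwo.add_self_eq_zero _
    simp
    linear_combination - this
  · simp [hi]

theorem aff_update {N : ℕ} (k : Fin N) {b : (Fin N → ZMod 2) → ZMod 2} (hb : Aff b) (i : Fin N) :
    Aff (fun y => Function.update y k (b y) i) := by
  by_cases hi : i = k
  · subst hi; simpa using hb
  · simpa [hi] using Aff.coord i

/-- Reduction to submodules and phases. -/
theorem finish {N : ℕ} (Φ g : (Fin N → ZMod 2) → ℂ) (W : Submodule (ZMod 2) (Fin N → ZMod 2))
    (t' : Fin N → ZMod 2) (hg : Phase g) (h1 : ∀ y, y - t' ∈ W → Φ y = g y)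
    (h2 : ∀ y, y - t' ∉ W → Φ y = 0) :
    ∃ (m' : ℕ) (R' : Matrix (Fin N) (Fin m') (ZMod 2)) (t' : Fin N → ZMod 2)
      (l' q' : (Fin N → ZMod 2) → ZMod 2) (c : ℂ),
      R'.rank = m' ∧ IsLinear l' ∧ IsQuadratic q' ∧ c ≠ 0 ∧
      Φ = c • ({x | ∃ u, x = R'.mulVec u + t'} : Set _).indicator
          fun x => Complex.I ^ (l' x).val * (-1 : ℂ) ^ (q' x).val := by
  obtain ⟨m', R', hr, hW⟩ := exists_matrix W
  obtain ⟨c, l, q, hc, hl, hq, h⟩ := hg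
  refine ⟨m', R', t', l, q, c, hr, hl, hq, hc, ?_⟩
  have key : ∀ y, (∃ u, y = R'.mulVec u + t') ↔ y - t' ∈ W := by
    intro y
    rw [← hW, LinearMap.mem_range]
    simp only [Matrix.mulVecLin_apply, eq_sub_iff_add_eq]
    exact exists_congr fun u => eq_comm
  ext y
  by_cases hy : y - t' ∈ W
  · rw [h1 y hy, h, Pi.smul_apply, Set.indicator_of_mem, smul_eq_mul]
    exact (key y).2 hy
  · rw [h2 y hy, Pi.smul_apply, Set.indicator_of_notMem, smul_zero]
    exact fun h => hy ((key y).1 h)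

/-- Applying a Hadamard gate to any single qubit of a state of the form
`|ψ⟩ ∝ Σ_{x∈A} i^{l(x)} (-1)^{q(x)} |x⟩` (with `A = {Ru + t}` affine, `R` of full
column rank, `l` linear, `q` quadratic) yields a state of the same form. -/
theorem hadamard_preserves_form (N m : ℕ) (k : Fin N)
    (R : Matrix (Fin N) (Fin m) (ZMod 2)) (hR : R.rank = m)
    (t : Fin N → ZMod 2)
    (l q : (Fin N → ZMod 2) → ZMod 2)
    (hl : IsLinear l) (hq : IsQuadratic q)
    (ψ : (Fin N → ZMod 2) → ℂ)
    (hψ : ψ = ({x | ∃ u, x = R.mulVec u + t} : Set _).indicator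
        fun x => Complex.I ^ (l x).val * (-1 : ℂ) ^ (q x).val) :
    ∃ (m' : ℕ) (R' : Matrix (Fin N) (Fin m') (ZMod 2)) (t' : Fin N → ZMod 2)
      (l' q' : (Fin N → ZMod 2) → ZMod 2) (c : ℂ),
      R'.rank = m' ∧ IsLinear l' ∧ IsQuadratic q' ∧ c ≠ 0 ∧
      (Hgate k).mulVec ψ =
        c • ({x | ∃ u, x = R'.mulVec u + t'} : Set _).indicator
          fun x => Complex.I ^ (l' x).val * (-1 : ℂ) ^ (q' x).val := by
  have hψ' : ∀ y, ψ y = if y - t ∈ LinearMap.range R.mulVecLin then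
      Complex.I ^ (l y).val * (-1 : ℂ) ^ (q y).val else 0 := by
    intro y
    have key : (∃ u, y = R.mulVec u + t) ↔ y - t ∈ LinearMap.range R.mulVecLin := by
      rw [LinearMap.mem_range]
      simp only [Matrix.mulVecLin_apply, eq_sub_iff_add_eq]
      exact exists_congr fun u => eq_comm
    rw [hψ, Set.indicator_apply]
    simp only [Set.mem_ofPred_eq, key]
  clear hψ hR
  generalize LinearMap.range R.mulVecLin = V at hψ'
  have hs : ((1 / Real.sqrt 2 : ℝ) : ℂ) ≠ 0 := by
    simp
  have hH := H_apply k ψ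
  generalize ((1 / Real.sqrt 2 : ℝ) : ℂ) = s at hs hH
  generalize (Hgate k).mulVec ψ = Φ at hH
  have hf : ∀ b : (Fin N → ZMod 2) → ZMod 2, Aff b →
      Phase (fun y => Complex.I ^ (l (Function.update y k (b y))).val *
        (-1 : ℂ) ^ (q (Function.update y k (b y))).val) := fun b hb =>
    (Phase.ofAff (hl.aff.comp (aff_update k hb))).mul (Phase.ofQuad (hq.comp (aff_update k hb)))
  by_cases he : (Pi.single k 1 : Fin N → ZMod 2) ∈ V
  · -- the flip direction lies in `V`
    have hmem : ∀ y (b : ZMod 2), Function.update y k b - t ∈ V ↔ y - t ∈ V := by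
      intro y b
      rw [update_eq, add_sub_right_comm]
      exact V.add_mem_iff_left (V.smul_mem _ he)
    obtain ⟨D, hD, hDq⟩ := hq.diff (Pi.single k 1)
    have hup : ∀ y : Fin N → ZMod 2, Function.update y k 1 =
        Function.update y k 0 + Pi.single k (1 : ZMod 2) := by
      intro y; ext i
      by_cases hi : i = k
      · subst hi; simp
      · simp [hi]
    have hL : Aff (fun y => D (Function.update y k 0)) := hD.comp (aff_update k (Aff.const 0))
    have hM : Aff (fun y => y k + D (Function.update y k 0)) := (Aff.coord k).add hL
    have hout : ∀ y, y - t ∉ V → Φ y = 0 := by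
      intro y hy
      rw [hH, hψ', hψ', if_neg, if_neg] <;> simp [hmem, hy]
    obtain ⟨d, hd⟩ := id hl
    have hld : ∀ x, l (x + Pi.single k 1) = l x + d k := by
      intro x
      simp [hd, mul_add, Finset.sum_add_distrib, Pi.single_apply]
    have hin : ∀ y, y - t ∈ V → Φ y = s * (Complex.I ^ (l (Function.update y k 0)).val *
        (-1 : ℂ) ^ (q (Function.update y k 0)).val) *
        (1 + Complex.I ^ (d k).val * (-1) ^ (y k + D (Function.update y k 0)
          + l (Function.update y k 0) * d k).val) := by
      intro y hy
      rw [hH, hψ', hψ', if_pos ((hmem _ _).2 hy), if_pos ((hmem _ _).2 hy), hup, hld, hDq]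
      simp only [I_pow_add, neg_pow_add]
      ring
    rcases z2 (d k) with hdk | hdk
    · simp only [hdk] at hin
      obtain ⟨c, a, hca⟩ := hM
      set lin : (Fin N → ZMod 2) →ₗ[ZMod 2] ZMod 2 := Fintype.linearCombination (ZMod 2) c with hlin
      have hlinM : ∀ y, y k + D (Function.update y k 0) = lin y + a := by
        intro y
        refine (hca y).trans ?_
        rw [hlin, Fintype.linearCombination_apply]
        simp [mul_comm]
      set t' := Function.update t k (D (Function.update t k 0)) with ht'
      have ht0 : lin t' + a = 0 := by
        rw [← hlinM, ht']
        simp [CharTwo.add_self_eq_zero]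
      have ht'V : t' - t ∈ V := by rw [ht', hmem]; simp
      have hyV : ∀ y, y - t' ∈ V ↔ y - t ∈ V := by
        intro y
        rw [← V.add_mem_iff_left ht'V]
        simp
      have hyl : ∀ y, lin (y - t') = y k + D (Function.update y k 0) := by
        intro y
        rw [hlinM, map_sub]
        linear_combination (-1 : ZMod 2) * ht0 + CharTwo.add_self_eq_zero (0 : ZMod 2)
      refine finish Φ _ (V ⊓ LinearMap.ker lin) t'
        ((Phase.const (c := s * 2) (by simp [hs])).mul (hf (fun _ => 0) (Aff.const 0))) ?_ ?_
      · intro y hy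
        rw [Submodule.mem_inf, hyV, LinearMap.mem_ker, hyl] at hy
        rw [hin y hy.1, hy.2]
        simp
        ring
      · intro y hy
        rw [Submodule.mem_inf, hyV, LinearMap.mem_ker, hyl] at hy
        by_cases hy1 : y - t ∈ V
        · rw [hin y hy1]
          have : y k + D (Function.update y k 0) = 1 :=
            (z2 _).resolve_left fun h => hy ⟨hy1, h⟩
          rw [this]
          simp [val1]
        · exact hout y hy1
    · simp only [hdk, mul_one] at hin
      have hM2 := hM.add (hl.aff.comp (aff_update k (Aff.const 0)))
      have hc : (1 + Complex.I) ≠ 0 := by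
        intro h
        have := congrArg Complex.re h
        simp at this
      refine finish Φ _ V t (((Phase.const (c := s * (1 + Complex.I)) (by simp [hs, hc])).mul
        (hf (fun _ => 0) (Aff.const 0))).mul
          ((Phase.ofAff hM2).mul (Phase.ofQuad hM2.quad))) ?_ hout
      intro y hy
      rw [hin y hy]
      generalize y k + D (Function.update y k 0) + l (Function.update y k 0) = M
      have : (1 + Complex.I ^ (1 : ZMod 2).val * (-1) ^ M.val) =
          (1 + Complex.I) * (Complex.I ^ M.val * (-1) ^ M.val) := by
        rcases z2 M with rfl | rfl
        · simp [val1]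
        · simp [val1]
          linear_combination Complex.I_mul_I
      rw [this]
      ring
  · obtain ⟨φ, hφe, hφV⟩ := Submodule.exists_le_ker_of_notMem he
    have hφe : φ (Pi.single k 1) = 1 := (z2 _).resolve_left hφe
    set b : (Fin N → ZMod 2) → ZMod 2 := fun y => φ (Function.update y k 0) + φ t with hbdef
    have hb : Aff b := ((Aff.ofLin φ).comp (aff_update k (Aff.const 0))).add (Aff.const _)
    have hφu : ∀ y a, φ (Function.update y k a) = φ (Function.update y k 0) + a := by
      intro y a
      rw [update_eq, update_eq]
      simp only [map_add, map_smul, hφe, smul_eq_mul]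
      ring
    have huniq : ∀ y a, Function.update y k a - t ∈ V → a = b y := by
      intro y a h
      have := hφV h
      rw [LinearMap.mem_ker, map_sub, hφu] at this
      have h2 : φ (Function.update y k 0) + φ (Function.update y k 0) = 0 :=
        CharTwo.add_self_eq_zero _
      simp only [hbdef]
      linear_combination this - h2
    have hval : ∀ y, Φ y = s * ((-1) ^ (y k * b y).val * ψ (Function.update y k (b y))) := by
      intro y
      rw [hH]
      rcases z2 (b y) with h | h
      · have : ψ (Function.update y k 1) = 0 := by
          rw [hψ', if_neg]
          intro h'
          have := huniq _ _ h'
          rw [h] at this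
          exact one_ne_zero this
        rw [this, h]; simp
      · have : ψ (Function.update y k 0) = 0 := by
          rw [hψ', if_neg]
          intro h'
          have := huniq _ _ h'
          rw [h] at this
          exact zero_ne_one this
        rw [this, h]; simp
    have hsupp : ∀ y, y - t ∈ V ⊔ Submodule.span (ZMod 2) {(Pi.single k 1 : Fin N → ZMod 2)} ↔
        Function.update y k (b y) - t ∈ V := by
      intro y
      constructor
      · intro h
        obtain ⟨v, hv, w, hw, hvw⟩ := Submodule.mem_sup.1 h
        obtain ⟨a, rfl⟩ := Submodule.mem_span_singleton.1 hw
        have e1 : Function.update y k (y k + a) - t ∈ V := by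
          have : Function.update y k (y k + a) - t = v := by
            rw [update_eq, add_sub_right_comm, ← hvw]
            have : y k + a + y k = a := by
              have := CharTwo.add_self_eq_zero (y k)
              linear_combination this
            rw [this, add_assoc, ← add_smul, CharTwo.add_self_eq_zero, zero_smul, add_zero]
          rw [this]; exact hv
        rwa [← huniq _ _ e1]
      · intro h
        rw [update_eq, add_sub_right_comm] at h
        have h' := Submodule.mem_sup_left (T := Submodule.span (ZMod 2)
          {(Pi.single k 1 : Fin N → ZMod 2)}) h
        refine (Submodule.add_mem_iff_left _ ?_).1 h'
        exact Submodule.mem_sup_right (Submodule.smul_mem _ _ (Submodule.mem_span_singleton_self _))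
    refine finish Φ _ (V ⊔ Submodule.span (ZMod 2)
      {(Pi.single k 1 : Fin N → ZMod 2)}) t (((Phase.const hs).mul (Phase.ofQuad ((Aff.coord k).mul hb))).mul
      (hf b hb)) ?_ ?_
    · intro y hy
      rw [hval, hψ', if_pos ((hsupp y).1 hy)]
      ring
    · intro y hy
      rw [hval, hψ', if_neg (fun h => hy ((hsupp y).2 h))]
      simp
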